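/- Let U(x,y) = (y·√(4x+(y−1)²) + y² + 2x − y)/(8x + 2(y−1)²) and V(x,y) = y/√(4x+(y−1)²), defined for real x, y with 4x + (y−1)² > 0. Then the orbit conservation identity x·(x−y)·V(x,y)⁴ = y⁴·U(x,y)·(U(x,y) − V(x,y)) holds at every such point; equivalently, U^{−1}(U−V)^{−1}V⁴ = x^{−1}(x−y)^{−1}y⁴ wherever both sides are defined. -/

import Mathlib

/-- The first coordinate of the algebraic flow `Φ` with vector field `(-4x²+3xy) • (-2xy+y²)`. -/
noncomputable def Ualg (x y : ℝ) : ℝ :=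
  (y * Real.sqrt (4 * x + (y - 1) ^ 2) + y ^ 2 + 2 * x - y) / (8 * x + 2 * (y - 1) ^ 2)

/-- The second coordinate of the algebraic flow `Φ` with vector field `(-4x²+3xy) • (-2xy+y²)`. -/
noncomputable def Valg (x y : ℝ) : ℝ :=
  y / Real.sqrt (4 * x + (y - 1) ^ 2)

/-!
Write `s² = 4x + (y - 1)²`. Eliminating `x` gives `U = ((s + y)² - 1) / (4s²)` and
`U - V = ((s - y)² - 1) / (4s²)`. The four linear factors of these two numerators, regrouped, are
those of `4x = s² - (y - 1)²` and `4(x - y) = s² - (y + 1)²`, so `U(U - V) = x(x - y) / s⁴`, while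
`V⁴ = y⁴ / s⁴`.
-/

theorem sixteen_mul_mul_sub_eq_of_sq_eq {R : Type*} [CommRing R] {s x y : R}
    (hs : s ^ 2 = 4 * x + (y - 1) ^ 2) :
    16 * (x * (x - y)) = ((s + y) ^ 2 - 1) * ((s - y) ^ 2 - 1) := by
  have four_mul_x : 4 * x = (s - y + 1) * (s + y - 1) := by linear_combination -hs
  have four_mul_x_sub_y : 4 * (x - y) = (s - y - 1) * (s + y + 1) := by linear_combination -hs
  calc
    16 * (x * (x - y)) = 4 * x * (4 * (x - y)) := by ring
    _ = (s - y + 1) * (s + y - 1) * ((s - y - 1) * (s + y + 1)) := by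
      rw [four_mul_x, four_mul_x_sub_y]
    _ = ((s + y) ^ 2 - 1) * ((s - y) ^ 2 - 1) := by ring

section Field

variable {K : Type*} [Field K]

/-- The first coordinate of the algebraic flow over an arbitrary field. The square root `s` of
`4x + (y - 1)²` is a separate argument, so that either branch may be chosen; the second coordinate
on the same branch is `y / s`. -/
def algFlowFst (s x y : K) : K :=
  (y * s + y ^ 2 + 2 * x - y) / (8 * x + 2 * (y - 1) ^ 2)

variable [NeZero (2 : K)] {s x y : K}

theorem algFlowFst_eq_of_sq_eq (hs : s ^ 2 = 4 * x + (y - 1) ^ 2) :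
    algFlowFst s x y = ((s + y) ^ 2 - 1) / (4 * s ^ 2) := by
  have two_mul_num : 2 * (y * s + y ^ 2 + 2 * x - y) = (s + y) ^ 2 - 1 := by
    linear_combination -hs
  have two_mul_den : 2 * (8 * x + 2 * (y - 1) ^ 2) = 4 * s ^ 2 := by
    linear_combination -4 * hs
  rw [algFlowFst, ← mul_div_mul_left _ _ (two_ne_zero' K), two_mul_num, two_mul_den]

theorem algFlowFst_sub_div_eq_of_sq_eq (hs₀ : s ≠ 0) (hs : s ^ 2 = 4 * x + (y - 1) ^ 2) :
    algFlowFst s x y - y / s = ((s - y) ^ 2 - 1) / (4 * s ^ 2) := by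
  have four_ne_zero : (4 : K) ≠ 0 := by
    simpa [show (4 : K) = 2 ^ 2 by norm_num] using two_ne_zero' K
  rw [algFlowFst_eq_of_sq_eq hs]
  field_simp
  ring

theorem algFlowFst_mul_sub_div_eq_of_sq_eq (hs₀ : s ≠ 0) (hs : s ^ 2 = 4 * x + (y - 1) ^ 2) :
    algFlowFst s x y * (algFlowFst s x y - y / s) = x * (x - y) / s ^ 4 := by
  have sixteen_ne_zero : (16 : K) ≠ 0 := by
    simpa [show (16 : K) = 2 ^ 4 by norm_num] using two_ne_zero' K
  calc
    algFlowFst s x y * (algFlowFst s x y - y / s)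
        = ((s + y) ^ 2 - 1) / (4 * s ^ 2) * (((s - y) ^ 2 - 1) / (4 * s ^ 2)) := by
      rw [algFlowFst_sub_div_eq_of_sq_eq hs₀ hs, algFlowFst_eq_of_sq_eq hs]
    _ = ((s + y) ^ 2 - 1) * ((s - y) ^ 2 - 1) / (16 * s ^ 4) := by
      rw [div_mul_div_comm]
      ring
    _ = x * (x - y) / s ^ 4 := by
      rw [← sixteen_mul_mul_sub_eq_of_sq_eq hs, mul_div_mul_left _ _ sixteen_ne_zero]

theorem alg_flow_orbit_conservation_general (hs₀ : s ≠ 0) (hs : s ^ 2 = 4 * x + (y - 1) ^ 2) :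
    x * (x - y) * (y / s) ^ 4 = y ^ 4 * algFlowFst s x y * (algFlowFst s x y - y / s) :=
  calc
    x * (x - y) * (y / s) ^ 4 = y ^ 4 * (x * (x - y) / s ^ 4) := by ring
    _ = y ^ 4 * algFlowFst s x y * (algFlowFst s x y - y / s) := by
      rw [← algFlowFst_mul_sub_div_eq_of_sq_eq hs₀ hs, mul_assoc]

end Field

/-- The orbit conservation identity
`x(x-y)·V⁴ = y⁴·U·(U-V)`, i.e. `U⁻¹(U-V)⁻¹V⁴ = x⁻¹(x-y)⁻¹y⁴` wherever defined. -/
theorem alg_flow_orbit_conservation (x y : ℝ) (h : 4 * x + (y - 1) ^ 2 > 0) :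
    x * (x - y) * (Valg x y) ^ 4 = y ^ 4 * Ualg x y * (Ualg x y - Valg x y) :=
  alg_flow_orbit_conservation_general (Real.sqrt_ne_zero'.mpr h) (Real.sq_sqrt h.le)
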